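/- Let s and t be real numbers with α = min{s, t}, and define δ_{s,t}(x) = (ψ(x+t) - ψ(x+s))/(t-s) - (2x + s + t + 1)/(2(x+s)(x+t)) when s ≠ t, and δ_{s,s}(x) = ψ'(x+s) - 1/(x+s) - 1/(2(x+s)²), for x ∈ (-α, ∞). Then δ_{s,t} is completely monotonic on (-α, ∞) whenever |t - s| < 1 (including s = t), and -δ_{s,t} is completely monotonic on (-α, ∞) whenever |t - s| > 1. -/

import Mathlib

open Real

/-- The digamma (psi) function, the derivative of `log ∘ Γ`. -/
noncomputable def digamma : ℝ → ℝ :=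
  deriv fun x : ℝ => Real.log (Real.Gamma x)

/-- A function `f` is completely monotonic on a set `S` if it has derivatives of all
orders on `S` and `(-1)^n f⁽ⁿ⁾(x) ≥ 0` for all `x ∈ S` and `n ≥ 0`. -/
def CompletelyMonotonicOn (f : ℝ → ℝ) (S : Set ℝ) : Prop :=
  (∀ x ∈ S, ContDiffAt ℝ (⊤ : ℕ∞) f x) ∧ ∀ (n : ℕ), ∀ x ∈ S, 0 ≤ (-1 : ℝ) ^ n * iteratedDeriv n f x

/-- The function `δ_{s,t}` built from a divided difference of the digamma function. -/
noncomputable def deltaFun (s t : ℝ) : ℝ → ℝ := fun x =>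
  if s = t then deriv digamma (x + s) - 1 / (x + s) - 1 / (2 * (x + s) ^ 2)
  else (digamma (x + t) - digamma (x + s)) / (t - s) -
    (2 * x + s + t + 1) / (2 * (x + s) * (x + t))

/-!
By `ψ (x + 1) = ψ x + 1 / x`, for `s ≠ t` the difference `δ_{s,t} x - δ_{s,t} (x + 1)` equals
`(1 - (t - s) ^ 2) / 2` times the product of the reciprocals of `x + s`, `x + s + 1`, `x + t` and
`x + t + 1`, so it is completely monotonic up to the sign of `1 - (t - s) ^ 2`. As `δ_{s,t}`
vanishes at infinity, it is the sum of the shifts of this difference by the natural numbers, and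
`δ_{s,s}` is the limit of `δ_{s,t}` as `t → s`. Both limits are only pointwise; they preserve
complete monotonicity because completely monotonic functions are convex, and for convex functions
pointwise convergence to a differentiable function forces convergence of the derivatives.
-/

open Set Filter Topology
open scoped ContDiff

theorem tendsto_deriv_of_convexOn {ι : Type*} {l : Filter ι} {F : ι → ℝ → ℝ} {f : ℝ → ℝ}
    {S : Set ℝ} {x : ℝ} (hS : S ∈ 𝓝 x) (hF : ∀ᶠ i in l, ConvexOn ℝ S (F i))
    (hFd : ∀ᶠ i in l, DifferentiableAt ℝ (F i) x) (hf : DifferentiableAt ℝ f x)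
    (hlim : ∀ y ∈ S, Tendsto (fun i => F i y) l (𝓝 (f y))) :
    Tendsto (fun i => deriv (F i) x) l (𝓝 (deriv f x)) := by
  -- By convexity, `deriv (F i) x` lies between the slopes of `F i` on either side of `x`.
  have hx : x ∈ S := mem_of_mem_nhds hS
  have hslope := hasDerivAt_iff_tendsto_slope_left_right.1 hf.hasDerivAt
  have hlim_slope : ∀ y ∈ S, Tendsto (fun i => slope (F i) x y) l (𝓝 (slope f x y)) := by
    intro y hy
    simpa only [slope_def_field] using ((hlim y hy).sub (hlim x hx)).div_const (y - x)
  refine tendsto_order.2 ⟨fun b hb => ?_, fun b hb => ?_⟩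
  · obtain ⟨y, ⟨hby, hyS⟩, hyx⟩ := (((hslope.1.eventually_const_lt hb).and
      (mem_nhdsWithin_of_mem_nhds hS)).and self_mem_nhdsWithin).exists
    filter_upwards [(hlim_slope y hyS).eventually_const_lt hby, hF, hFd] with i hbi hconv hdiff
    rw [slope_comm] at hbi
    exact hbi.trans_le (hconv.slope_le_deriv hyS hx hyx hdiff)
  · obtain ⟨y, ⟨hyb, hyS⟩, hxy⟩ := (((hslope.2.eventually_lt_const hb).and
      (mem_nhdsWithin_of_mem_nhds hS)).and self_mem_nhdsWithin).exists
    filter_upwards [(hlim_slope y hyS).eventually_lt_const hyb, hF, hFd] with i hib hconv hdiff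
    exact (hconv.deriv_le_slope hx hyS hxy hdiff).trans_lt hib

namespace CompletelyMonotonicOn

variable {f g : ℝ → ℝ} {S T : Set ℝ}

theorem mono (hf : CompletelyMonotonicOn f T) (h : S ⊆ T) : CompletelyMonotonicOn f S :=
  ⟨fun x hx => hf.1 x (h hx), fun n x hx => hf.2 n x (h hx)⟩

theorem contDiffAt_natCast (hf : CompletelyMonotonicOn f S) {x : ℝ} (hx : x ∈ S) (n : ℕ) :
    ContDiffAt ℝ n f x :=
  (hf.1 x hx).of_le (mod_cast le_top)

theorem congr (hS : IsOpen S) (hf : CompletelyMonotonicOn f S) (h : EqOn g f S) :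
    CompletelyMonotonicOn g S := by
  refine ⟨fun x hx => (hf.1 x hx).congr_of_eventuallyEq (h.eventuallyEq_of_mem (hS.mem_nhds hx)),
    fun n x hx => ?_⟩
  rw [h.iteratedDeriv_of_isOpen hS n hx]
  exact hf.2 n x hx

theorem sum {ι : Type*} {F : ι → ℝ → ℝ} {s : Finset ι}
    (hF : ∀ i ∈ s, CompletelyMonotonicOn (F i) S) :
    CompletelyMonotonicOn (fun x => ∑ i ∈ s, F i x) S := by
  refine ⟨fun x hx => ContDiffAt.sum fun i hi => (hF i hi).1 x hx, fun n x hx => ?_⟩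
  rw [iteratedDeriv_fun_sum fun i hi => (hF i hi).contDiffAt_natCast hx n, Finset.mul_sum]
  exact Finset.sum_nonneg fun i hi => (hF i hi).2 n x hx

theorem const_mul {c : ℝ} (hc : 0 ≤ c) (hf : CompletelyMonotonicOn f S) :
    CompletelyMonotonicOn (fun x => c * f x) S := by
  refine ⟨fun x hx => contDiffAt_const.mul (hf.1 x hx), fun n x hx => ?_⟩
  rw [iteratedDeriv_const_mul_field, mul_left_comm]
  exact mul_nonneg hc (hf.2 n x hx)

theorem mul (hf : CompletelyMonotonicOn f S) (hg : CompletelyMonotonicOn g S) :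
    CompletelyMonotonicOn (f * g) S := by
  refine ⟨fun x hx => (hf.1 x hx).mul (hg.1 x hx), fun n x hx => ?_⟩
  rw [iteratedDeriv_mul (hf.contDiffAt_natCast hx n) (hg.contDiffAt_natCast hx n), Finset.mul_sum]
  refine Finset.sum_nonneg fun i hi => ?_
  have hsign : (-1 : ℝ) ^ n = (-1) ^ i * (-1) ^ (n - i) := by
    rw [← pow_add, Nat.add_sub_cancel' (Finset.mem_range_succ_iff.1 hi)]
  calc (0 : ℝ) ≤ n.choose i * (((-1) ^ i * iteratedDeriv i f x) *
        ((-1) ^ (n - i) * iteratedDeriv (n - i) g x)) :=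
        mul_nonneg (Nat.cast_nonneg _) (mul_nonneg (hf.2 i x hx) (hg.2 (n - i) x hx))
    _ = (-1) ^ n * (n.choose i * iteratedDeriv i f x * iteratedDeriv (n - i) g x) := by
        rw [hsign]; ring

theorem comp_add_const {r : ℝ} (hf : CompletelyMonotonicOn f T) (hr : MapsTo (· + r) S T) :
    CompletelyMonotonicOn (fun x => f (x + r)) S := by
  refine ⟨fun x hx => (hf.1 (x + r) (hr hx)).comp x (by fun_prop), fun n x hx => ?_⟩
  rw [iteratedDeriv_comp_add_const]
  exact hf.2 n (x + r) (hr hx)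

theorem neg_deriv (hf : CompletelyMonotonicOn f S) :
    CompletelyMonotonicOn (fun x => -deriv f x) S := by
  refine ⟨fun x hx => ((hf.1 x hx).derivWithin (by simp)).neg, fun n x hx => ?_⟩
  rw [iteratedDeriv_fun_neg, ← iteratedDeriv_succ', mul_neg, ← neg_mul, ← mul_neg_one, ← pow_succ]
  exact hf.2 (n + 1) x hx

theorem convexOn (hf : CompletelyMonotonicOn f S) (hS : Convex ℝ S) : ConvexOn ℝ S f := by
  refine convexOn_of_deriv2_nonneg' hS
    (fun x hx => ((hf.1 x hx).differentiableAt (by simp)).differentiableWithinAt)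
    (fun x hx => (((hf.1 x hx).derivWithin (m := ∞) (by simp)).differentiableAt
      (by simp)).differentiableWithinAt) fun x hx => ?_
  simpa [iteratedDeriv_eq_iterate] using hf.2 2 x hx

theorem of_tendsto {ι : Type*} {l : Filter ι} [l.NeBot] {F : ι → ℝ → ℝ} (hS : IsOpen S)
    (hF : ∀ᶠ i in l, CompletelyMonotonicOn (F i) S) (hf : ∀ x ∈ S, ContDiffAt ℝ ∞ f x)
    (hlim : ∀ x ∈ S, Tendsto (fun i => F i x) l (𝓝 (f x))) : CompletelyMonotonicOn f S := by
  refine ⟨hf, fun n => ?_⟩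
  induction n generalizing F f with
  | zero =>
    intro x hx
    refine ge_of_tendsto (by simpa using hlim x hx) (hF.mono fun i hi => ?_)
    simpa using hi.2 0 x hx
  | succ n ih =>
    have hderiv : ∀ x ∈ S, Tendsto (fun i => deriv (F i) x) l (𝓝 (deriv f x)) := by
      intro x hx
      obtain ⟨ε, hε, hball⟩ := Metric.isOpen_iff.1 hS x hx
      exact tendsto_deriv_of_convexOn (Metric.ball_mem_nhds x hε)
        (hF.mono fun i hi => (hi.mono hball).convexOn (convex_ball x ε))
        (hF.mono fun i hi => (hi.1 x hx).differentiableAt (by simp))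
        ((hf x hx).differentiableAt (by simp)) fun y hy => hlim y (hball hy)
    intro x hx
    have h := ih (hF.mono fun i hi => hi.neg_deriv)
      (fun y hy => ((hf y hy).derivWithin (by simp)).neg) (fun y hy => (hderiv y hy).neg) x hx
    rwa [iteratedDeriv_fun_neg, ← iteratedDeriv_succ', mul_neg, ← neg_mul, ← mul_neg_one,
      ← pow_succ] at h

theorem of_sub_comp_add_const {a h : ℝ} (hh : 0 < h) (hf : ∀ x ∈ Ioi a, ContDiffAt ℝ ∞ f x)
    (hlim : Tendsto f atTop (𝓝 0))
    (hsub : CompletelyMonotonicOn (fun x => f x - f (x + h)) (Ioi a)) :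
    CompletelyMonotonicOn f (Ioi a) := by
  have hshift (k : ℕ) : MapsTo (· + k * h) (Ioi a) (Ioi a) := fun x (hx : a < x) =>
    lt_add_of_lt_of_nonneg hx (by positivity)
  refine of_tendsto (l := atTop) isOpen_Ioi
    (Eventually.of_forall fun N => sum (s := Finset.range N) fun k _ =>
      hsub.comp_add_const (hshift k)) hf fun x _ => ?_
  have htelescope (N : ℕ) :
      ∑ k ∈ Finset.range N, (f (x + k * h) - f (x + k * h + h)) = f x - f (x + N * h) := by
    simpa [add_mul, add_assoc] using Finset.sum_range_sub' (fun k : ℕ => f (x + k * h)) N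
  simp only [htelescope]
  simpa using (hlim.comp (tendsto_atTop_add_const_left atTop x
    (tendsto_natCast_atTop_atTop.atTop_mul_const hh))).const_sub (f x)

end CompletelyMonotonicOn

theorem completelyMonotonicOn_inv : CompletelyMonotonicOn (fun x => x⁻¹) (Ioi 0) := by
  refine ⟨fun x hx => contDiffAt_inv ℝ (ne_of_gt hx), fun n x hx => ?_⟩
  have hx : 0 < x := hx
  rw [iteratedDeriv_eq_iterate, iter_deriv_inv, ← mul_assoc, ← mul_assoc, ← mul_pow]
  simp only [mul_neg, mul_one, neg_neg, one_pow, one_mul]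
  positivity

theorem analyticAt_Gamma {x : ℝ} (hx : ∀ m : ℕ, x ≠ -m) : AnalyticAt ℝ Gamma x := by
  have hne : Complex.Gamma x ≠ 0 := by
    rw [Complex.Gamma_ofReal]
    exact mod_cast Gamma_ne_zero hx
  have h : AnalyticAt ℂ Complex.Gamma x := by
    simpa using (Complex.differentiable_one_div_Gamma.analyticAt (x : ℂ)).fun_inv (inv_ne_zero hne)
  simpa only [Complex.Gamma_ofReal, Complex.ofReal_re] using h.re_ofReal

theorem analyticAt_log_Gamma {x : ℝ} (hx : 0 < x) : AnalyticAt ℝ (fun y => log (Gamma y)) x :=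
  (analyticAt_Gamma fun m => (neg_nonpos.2 m.cast_nonneg |>.trans_lt hx).ne').log
    (Gamma_pos_of_pos hx)

@[fun_prop]
theorem contDiffAt_digamma {x : ℝ} (hx : 0 < x) {n : WithTop ℕ∞} : ContDiffAt ℝ n digamma x :=
  (analyticAt_log_Gamma hx).deriv.contDiffAt

theorem digamma_add_one {x : ℝ} (hx : 0 < x) : digamma (x + 1) = digamma x + x⁻¹ := by
  have hlog : (fun y => log (Gamma (y + 1))) =ᶠ[𝓝 x] fun y => log (Gamma y) + log y := by
    filter_upwards [lt_mem_nhds hx] with y hy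
    rw [Gamma_add_one hy.ne', log_mul hy.ne' (Gamma_pos_of_pos hy).ne', add_comm]
  calc digamma (x + 1) = deriv (fun y => log (Gamma (y + 1))) x :=
        (deriv_comp_add_const (fun y => log (Gamma y)) 1 x).symm
    _ = deriv (fun y => log (Gamma y) + log y) x := hlog.deriv_eq
    _ = digamma x + x⁻¹ := by
        rw [deriv_fun_add (analyticAt_log_Gamma hx).differentiableAt (differentiableAt_log hx.ne'),
          deriv_log, digamma]

theorem monotoneOn_digamma : MonotoneOn digamma (Ioi 0) :=
  convexOn_log_Gamma.monotoneOn_deriv fun _ hx => (analyticAt_log_Gamma hx).differentiableAt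

theorem tendsto_digamma_add_natCast_sub_digamma (m : ℕ) :
    Tendsto (fun x => digamma (x + m) - digamma x) atTop (𝓝 0) := by
  induction m with
  | zero => simp
  | succ m ih =>
    have h := ih.add (tendsto_atTop_add_const_right atTop (m : ℝ) tendsto_id).inv_tendsto_atTop
    rw [add_zero] at h
    refine h.congr' ?_
    filter_upwards [eventually_gt_atTop 0] with x hx
    rw [Nat.cast_succ, ← add_assoc, digamma_add_one (by positivity)]
    simp only [Pi.inv_apply, id_eq]
    ring

theorem tendsto_digamma_add_sub_digamma_add (p q : ℝ) :
    Tendsto (fun x => digamma (x + q) - digamma (x + p)) atTop (𝓝 0) := by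
  wlog hpq : p ≤ q generalizing p q
  · simpa using (this q p (le_of_not_ge hpq)).neg
  obtain ⟨m, hm⟩ := exists_nat_ge (q - p)
  have hupper : Tendsto (fun x => digamma (x + p + m) - digamma (x + p)) atTop (𝓝 0) :=
    (tendsto_digamma_add_natCast_sub_digamma m).comp
      (tendsto_atTop_add_const_right atTop p tendsto_id)
  refine squeeze_zero' ?_ ?_ hupper <;> filter_upwards [eventually_gt_atTop (-p)] with x hx
  · exact sub_nonneg.2 (monotoneOn_digamma (mem_Ioi.2 (by linarith)) (mem_Ioi.2 (by linarith))
      (by linarith))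
  · exact sub_le_sub_right (monotoneOn_digamma (mem_Ioi.2 (by linarith))
      (mem_Ioi.2 (by linarith)) (by linarith)) _

section deltaFun

variable {s t x : ℝ}

theorem deltaFun_eq_dslope (hs : x + s ≠ 0) (ht : x + t ≠ 0) :
    deltaFun s t x = dslope digamma (x + s) (x + t) -
      ((x + s)⁻¹ + (x + t)⁻¹ + (x + s)⁻¹ * (x + t)⁻¹) / 2 := by
  rcases eq_or_ne s t with rfl | hst
  · rw [dslope_same, deltaFun, if_pos rfl]
    field_simp
    ring
  · rw [dslope_of_ne _ (by simpa using hst.symm), slope_def_field, deltaFun, if_neg hst,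
      add_sub_add_left_eq_sub]
    congr 1
    field_simp
    ring

theorem contDiffAt_deltaFun (hs : 0 < x + s) (ht : 0 < x + t) :
    ContDiffAt ℝ ∞ (deltaFun s t) x := by
  unfold deltaFun
  split_ifs
  · have hψ : ContDiffAt ℝ ∞ (deriv digamma) (x + s) :=
      (contDiffAt_digamma hs (n := ∞)).derivWithin (by simp)
    have hψ_shift : ContDiffAt ℝ ∞ (fun y => deriv digamma (y + s)) x :=
      ContDiffAt.comp (g := deriv digamma) (f := (· + s)) x hψ (by fun_prop)
    refine (hψ_shift.sub ?_).sub ?_ <;> fun_prop (disch := positivity)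
  · fun_prop (disch := positivity)

theorem deltaFun_sub_deltaFun_add_one (hst : s ≠ t) (hs : 0 < x + s) (ht : 0 < x + t) :
    deltaFun s t x - deltaFun s t (x + 1) = (1 - (t - s) ^ 2) / 2 *
      ((x + s)⁻¹ * (x + (s + 1))⁻¹ * ((x + t)⁻¹ * (x + (t + 1))⁻¹)) := by
  have hd : t - s ≠ 0 := sub_ne_zero.2 hst.symm
  simp only [deltaFun, if_neg hst]
  rw [add_right_comm x 1 s, add_right_comm x 1 t,
    digamma_add_one hs, digamma_add_one ht, ← add_assoc, ← add_assoc]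
  field_simp
  ring

theorem tendsto_deltaFun_atTop (hst : s ≠ t) : Tendsto (deltaFun s t) atTop (𝓝 0) := by
  have hinv (r : ℝ) : Tendsto (fun x => (x + r)⁻¹) atTop (𝓝 0) :=
    (tendsto_atTop_add_const_right atTop r tendsto_id).inv_tendsto_atTop
  have h := ((tendsto_digamma_add_sub_digamma_add s t).div_const (t - s)).sub
    ((((hinv s).add (hinv t)).add ((hinv s).mul (hinv t))).div_const 2)
  simp only [zero_div, add_zero, mul_zero, sub_zero] at h
  refine h.congr' ?_
  filter_upwards [eventually_gt_atTop (-s), eventually_gt_atTop (-t)] with x hs ht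
  rw [deltaFun_eq_dslope (by linarith) (by linarith), dslope_of_ne _ (by simpa using hst.symm),
    slope_def_field, add_sub_add_left_eq_sub]

theorem continuousAt_deltaFun_self (hs : 0 < x + s) :
    ContinuousAt (fun t => deltaFun s t x) s := by
  have hslope : ContinuousAt (dslope digamma (x + s)) (x + s) :=
    continuousAt_dslope_same.2 ((contDiffAt_digamma hs).differentiableAt one_ne_zero)
  have hcont : ContinuousAt (fun t => dslope digamma (x + s) (x + t) -
      ((x + s)⁻¹ + (x + t)⁻¹ + (x + s)⁻¹ * (x + t)⁻¹) / 2) s :=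
    (ContinuousAt.comp' (f := (x + ·)) hslope (by fun_prop)).sub
      (by fun_prop (disch := positivity))
  refine hcont.congr ?_
  filter_upwards [lt_mem_nhds (neg_lt_iff_pos_add'.2 hs)] with t ht
  exact (deltaFun_eq_dslope hs.ne' (neg_lt_iff_pos_add'.1 ht).ne').symm

theorem completelyMonotonicOn_const_mul_deltaFun {c : ℝ} (hst : s ≠ t)
    (hc : 0 ≤ c * (1 - (t - s) ^ 2)) :
    CompletelyMonotonicOn (fun x => c * deltaFun s t x) (Ioi (-min s t)) := by
  have hpos {x : ℝ} (hx : x ∈ Ioi (-min s t)) : 0 < x + s ∧ 0 < x + t := by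
    rw [mem_Ioi, neg_lt, lt_min_iff] at hx
    constructor <;> linarith
  have hinv {r : ℝ} (hr : min s t ≤ r) :
      CompletelyMonotonicOn (fun x => (x + r)⁻¹) (Ioi (-min s t)) :=
    completelyMonotonicOn_inv.comp_add_const fun x (hx : -min s t < x) =>
      neg_lt_iff_pos_add.1 ((neg_le_neg hr).trans_lt hx)
  have hs := min_le_left s t
  have ht := min_le_right s t
  have hprod := ((hinv hs).mul (hinv (r := s + 1) (by linarith))).mul
    ((hinv ht).mul (hinv (r := t + 1) (by linarith)))
  refine .of_sub_comp_add_const one_pos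
    (fun x hx => contDiffAt_const.mul (contDiffAt_deltaFun (hpos hx).1 (hpos hx).2))
    (by simpa using (tendsto_deltaFun_atTop hst).const_mul c)
    ((hprod.const_mul (div_nonneg hc zero_le_two)).congr isOpen_Ioi fun x hx => ?_)
  rw [← mul_sub, deltaFun_sub_deltaFun_add_one hst (hpos hx).1 (hpos hx).2]
  simp only [Pi.mul_apply]
  ring

theorem completelyMonotonicOn_deltaFun_of_ne (hst : s ≠ t) (h : |t - s| ≤ 1) :
    CompletelyMonotonicOn (deltaFun s t) (Ioi (-min s t)) := by
  simpa only [one_mul] using completelyMonotonicOn_const_mul_deltaFun (c := 1) hst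
    (by linarith [(sq_le_one_iff_abs_le_one _).2 h])

theorem completelyMonotonicOn_neg_deltaFun (h : 1 ≤ |t - s|) :
    CompletelyMonotonicOn (fun x => -deltaFun s t x) (Ioi (-min s t)) := by
  have hst : s ≠ t := by
    rintro rfl
    norm_num at h
  simpa only [neg_one_mul] using completelyMonotonicOn_const_mul_deltaFun (c := -1) hst
    (by linarith [(one_le_sq_iff_one_le_abs _).2 h])

theorem completelyMonotonicOn_deltaFun_self (s : ℝ) :
    CompletelyMonotonicOn (deltaFun s s) (Ioi (-s)) := by
  have hpos {x : ℝ} (hx : x ∈ Ioi (-s)) : 0 < x + s := neg_lt_iff_pos_add.1 hx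
  refine .of_tendsto (l := 𝓝[>] s) (F := deltaFun s) isOpen_Ioi ?_
    (fun x hx => contDiffAt_deltaFun (hpos hx) (hpos hx))
    fun x hx => (continuousAt_deltaFun_self (hpos hx)).mono_left nhdsWithin_le_nhds
  filter_upwards [Ioo_mem_nhdsGT (lt_add_one s)] with t ⟨hst, hts⟩
  simpa only [min_eq_left hst.le] using completelyMonotonicOn_deltaFun_of_ne hst.ne
    (abs_le.2 ⟨by linarith, by linarith⟩)

theorem completelyMonotonicOn_deltaFun (h : |t - s| ≤ 1) :
    CompletelyMonotonicOn (deltaFun s t) (Ioi (-min s t)) := by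
  rcases eq_or_ne s t with rfl | hst
  · simpa only [min_self] using completelyMonotonicOn_deltaFun_self s
  · exact completelyMonotonicOn_deltaFun_of_ne hst h

end deltaFun

theorem qi_divided_difference_complete_monotonicity (s t : ℝ) :
    (|t - s| < 1 → CompletelyMonotonicOn (deltaFun s t) (Set.Ioi (-(min s t)))) ∧
      (1 < |t - s| →
        CompletelyMonotonicOn (fun x => -(deltaFun s t x)) (Set.Ioi (-(min s t)))) :=
  ⟨fun h => completelyMonotonicOn_deltaFun h.le, fun h => completelyMonotonicOn_neg_deltaFun h.le⟩
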